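/- arXiv:1801.08956 — 2 statements merged into one kernel-verified Lean document; each statement's English description precedes it below -/
import Mathlib

section
/- Let (Ω, μ) be a probability space with an ℝ^d-action φ preserving μ, and let f : Ω → ℝ be μ-integrable. Suppose that for μ-a.e. Λ the function t ↦ f(φ_t(Λ)) on ℝ^d is harmonic (as a locally integrable function satisfying the mean value property over balls). If for μ-a.e. Λ the function t ↦ f(φ_t(Λ)) is unbounded whenever it is non-constant, and the set of Λ for which it is non-constant has positive μ-measure, then ∫_Ω (1/λ^d(B_R(0))) ∫_{B_R(0)} |f(φ_t(Λ))| dt dμ(Λ) → ∞ as R → ∞, contradicting ∫|f| dμ < ∞. Consequently, under these hypotheses f(φ_t(Λ)) is constant in t for μ-a.e. Λ. -/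
open MeasureTheory Metric

open Filter Topology
open scoped ENNReal

/-- A family of a.e. measurable functions that is almost surely continuous in the parameter agrees,
almost surely and for all parameters at once, with a jointly measurable function. -/
theorem exists_measurable_uncurry_of_ae_continuous {E Ω : Type*} [TopologicalSpace E]
    [TopologicalSpace.MetrizableSpace E] [SecondCountableTopology E] [MeasurableSpace E]
    [OpensMeasurableSpace E] [MeasurableSpace Ω] {μ : Measure Ω} {u : E → Ω → ℝ≥0∞}
    (hu : ∀ t, AEMeasurable (u t) μ) (hcont : ∀ᵐ ω ∂μ, Continuous fun t => u t ω) :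
    ∃ W : E × Ω → ℝ≥0∞, Measurable W ∧ ∀ᵐ ω ∂μ, ∀ t, W (t, ω) = u t ω := by
  have hid : StronglyMeasurable (id : E → E) := stronglyMeasurable_id
  refine ⟨fun p => liminf (fun n => (hu (hid.approx n p.1)).mk _ p.2) atTop,
    .liminf fun n => ?_, ?_⟩
  · have hm : Measurable fun p : (hid.approx n).range × Ω => (hu p.1).mk _ p.2 :=
      measurable_from_prod_countable_right fun x => (hu x).measurable_mk
    exact hm.comp ((((hid.approx n).measurable.comp measurable_fst).subtype_mk
      (h := fun p => SimpleFunc.mem_range_self _ p.1)).prodMk measurable_snd)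
  · have hmk : ∀ᵐ ω ∂μ, ∀ n, ∀ x ∈ ((hid.approx n).range : Set E), u x ω = (hu x).mk _ ω := by
      refine ae_all_iff.2 fun n => ?_
      exact (ae_ball_iff (hid.approx n).range.countable_toSet).2 fun x _ => (hu x).ae_eq_mk
    filter_upwards [hcont, hmk] with ω hc hω t
    have heq : (fun n => (hu (hid.approx n t)).mk _ ω) = fun n => u (hid.approx n t) ω :=
      funext fun n => (hω n _ (SimpleFunc.mem_range_self _ t)).symm
    simp only [heq]
    exact ((hc.tendsto t).comp (hid.tendsto_approx t)).liminf_eq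

section Harmonic

variable {E : Type*} [NormedAddCommGroup E] [NormedSpace ℝ E] [FiniteDimensional ℝ E]
  [MeasurableSpace E] [BorelSpace E] {ν : Measure E} [ν.IsAddHaarMeasure] {u : E → ℝ}

/-- The integral of a locally integrable function over a ball depends continuously on the
centre. -/
theorem MeasureTheory.LocallyIntegrable.continuous_setIntegral_ball
    (hu : LocallyIntegrable u ν) {r : ℝ} (hr : 0 < r) :
    Continuous fun x => ∫ y in ball x r, u y ∂ν := by
  refine continuous_iff_continuousAt.2 fun x₀ => ?_
  simp only [ContinuousAt, ← integral_indicator measurableSet_ball]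
  refine tendsto_integral_filter_of_dominated_convergence
    ((closedBall x₀ (r + r)).indicator fun y => ‖u y‖) ?_ ?_ ?_ ?_
  · exact .of_forall fun x => hu.aestronglyMeasurable.indicator measurableSet_ball
  · filter_upwards [ball_mem_nhds x₀ hr] with x hx
    refine .of_forall fun y => ?_
    rw [norm_indicator_eq_indicator_norm]
    refine Set.indicator_le_indicator_of_subset (fun z hz => ?_) (fun _ => norm_nonneg _) y
    rw [mem_ball] at hx hz
    exact mem_closedBall.2 ((dist_triangle z x x₀).trans (by linarith))
  · exact (integrable_indicator_iff measurableSet_closedBall).2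
      (hu.integrableOn_isCompact (isCompact_closedBall _ _)).norm
  · have hs : ∀ᵐ y ∂ν, y ∉ sphere x₀ r :=
      measure_eq_zero_iff_ae_notMem.1 (Measure.addHaar_sphere_of_ne_zero ν x₀ hr.ne')
    filter_upwards [hs] with y hy
    refine tendsto_const_nhds.congr' ?_
    have hd : Tendsto (fun x => dist y x) (𝓝 x₀) (𝓝 (dist y x₀)) :=
      (continuous_const.dist continuous_id).tendsto x₀
    rcases lt_or_gt_of_ne (fun h => hy (mem_sphere.2 h)) with h | h
    · filter_upwards [hd.eventually_lt_const h] with x hx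
      rw [Set.indicator_of_mem (mem_ball.2 h), Set.indicator_of_mem (mem_ball.2 hx)]
    · filter_upwards [hd.eventually_const_lt h] with x hx
      rw [Set.indicator_of_notMem (fun hm => h.not_gt (mem_ball.1 hm)),
        Set.indicator_of_notMem (fun hm => hx.not_gt (mem_ball.1 hm))]

/-- A locally integrable function with the mean value property over balls of one fixed radius is
continuous. -/
theorem continuous_of_eq_average_ball (hu : LocallyIntegrable u ν) {r : ℝ} (hr : 0 < r)
    (hmean : ∀ x, u x = ⨍ y in ball x r, u y ∂ν) : Continuous u := by
  have heq : u = fun x => (ν.real (ball 0 r))⁻¹ * ∫ y in ball x r, u y ∂ν := by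
    funext x
    rw [← Measure.addHaar_real_ball_center ν x r, ← smul_eq_mul, ← setAverage_eq]
    exact hmean x
  rw [heq]
  exact continuous_const.mul (hu.continuous_setIntegral_ball hr)

/-- A function with the mean value property over balls is bounded as soon as the averages of its
absolute value over a sequence of balls exhausting the space have finite lower limit. -/
theorem exists_abs_le_of_liminf_average_lt_top
    (hmean : ∀ x r, 0 < r → u x = ⨍ y in ball x r, u y ∂ν)
    (hlim : liminf (fun n : ℕ => (ν (ball 0 (2 * (n + 1 : ℝ))))⁻¹ *
      ∫⁻ y in ball 0 (2 * (n + 1 : ℝ)), ‖u y‖ₑ ∂ν) atTop < ∞) :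
    ∃ C : ℝ, ∀ x, |u x| ≤ C := by
  obtain ⟨C, hC, hCtop⟩ := exists_between hlim
  have hfreq := frequently_lt_of_liminf_lt (by isBoundedDefault) hC
  set K : ℝ≥0∞ := ENNReal.ofReal (2 ^ Module.finrank ℝ E)
  have hK0 : K ≠ 0 := by simp [K]
  refine ⟨(K * C).toReal, fun x => ?_⟩
  obtain ⟨N, hN⟩ := exists_nat_gt ‖x‖
  obtain ⟨n, hn, hlt⟩ := (frequently_atTop.1 hfreq) N
  have hn' : (N : ℝ) ≤ n := by exact_mod_cast hn
  have hr : (0 : ℝ) < n + 1 := by positivity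
  have hsub : ball x (n + 1 : ℝ) ⊆ ball 0 (2 * (n + 1 : ℝ)) :=
    ball_subset_ball' (by rw [dist_zero_right]; linarith)
  have hvol : (ν (ball x (n + 1 : ℝ)))⁻¹ = K * (ν (ball 0 (2 * (n + 1 : ℝ))))⁻¹ := by
    rw [Measure.addHaar_ball_center, Measure.addHaar_ball_mul_of_pos ν 0 two_pos,
      ENNReal.mul_inv (.inl hK0) (.inl ENNReal.ofReal_ne_top), ← mul_assoc,
      ENNReal.mul_inv_cancel hK0 ENNReal.ofReal_ne_top, one_mul]
  have hle : ‖u x‖ₑ ≤ K * C := calc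
    ‖u x‖ₑ = ‖⨍ y in ball x (n + 1 : ℝ), u y ∂ν‖ₑ := by rw [← hmean x _ hr]
    _ ≤ (ν (ball x (n + 1 : ℝ)))⁻¹ * ∫⁻ y in ball x (n + 1 : ℝ), ‖u y‖ₑ ∂ν := by
      refine (enorm_integral_le_lintegral_enorm _).trans ?_
      simp
    _ ≤ (ν (ball x (n + 1 : ℝ)))⁻¹ * ∫⁻ y in ball 0 (2 * (n + 1 : ℝ)), ‖u y‖ₑ ∂ν := by
      gcongr
    _ ≤ K * C := by
      rw [hvol, mul_assoc]
      gcongr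
  have := ENNReal.toReal_mono (ENNReal.mul_ne_top ENNReal.ofReal_ne_top hCtop.ne) hle
  simpa [K] using this

end Harmonic

/-- If a jointly measurable nonnegative process has uniformly bounded finite means, then almost
surely its averages over any sequence of sets of positive finite measure have finite lower
limit. -/
theorem ae_liminf_average_lt_top {E Ω : Type*} [MeasurableSpace E] [MeasurableSpace Ω]
    {ν : Measure E} [SFinite ν] {μ : Measure Ω} [SFinite μ] {W : E × Ω → ℝ≥0∞}
    (hW : Measurable W) {M : ℝ≥0∞} (hM : M ≠ ∞) (hWM : ∀ t, ∫⁻ ω, W (t, ω) ∂μ ≤ M)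
    {B : ℕ → Set E} (h0 : ∀ n, ν (B n) ≠ 0) (htop : ∀ n, ν (B n) ≠ ∞) :
    ∀ᵐ ω ∂μ, liminf (fun n => (ν (B n))⁻¹ * ∫⁻ t in B n, W (t, ω) ∂ν) atTop < ∞ := by
  have hmeas : ∀ n, Measurable fun ω => ∫⁻ t in B n, W (t, ω) ∂ν := fun n =>
    hW.lintegral_prod_left'
  refine ae_lt_top (.liminf fun n => (hmeas n).const_mul _) (ne_top_of_le_ne_top hM ?_)
  refine (lintegral_liminf_le fun n => (hmeas n).const_mul _).trans ?_
  have hn : ∀ n, ∫⁻ ω, (ν (B n))⁻¹ * ∫⁻ t in B n, W (t, ω) ∂ν ∂μ ≤ M := fun n => by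
    rw [lintegral_const_mul _ (hmeas n), lintegral_lintegral_swap (by
      exact (hW.comp measurable_swap).aemeasurable)]
    calc (ν (B n))⁻¹ * ∫⁻ t in B n, ∫⁻ ω, W (t, ω) ∂μ ∂ν
        ≤ (ν (B n))⁻¹ * ∫⁻ _ in B n, M ∂ν := by gcongr with t; exact hWM t
      _ = M := by
        rw [setLIntegral_const, mul_comm M, ← mul_assoc,
          ENNReal.inv_mul_cancel (h0 n) (htop n), one_mul]
  exact (liminf_le_liminf (.of_forall hn)).trans_eq (liminf_const M)

/-- Liouville-type theorem: an integrable function that is harmonic along orbits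
(in the ball mean-value sense), and unbounded along any orbit where it is
non-constant, must be constant along μ-a.e. orbit. -/
theorem orbitwise_harmonic_integrable_constant {d : ℕ} {Ω : Type*} [MeasurableSpace Ω]
    (μ : Measure Ω) [IsProbabilityMeasure μ]
    (φ : EuclideanSpace ℝ (Fin d) → Ω → Ω)
    (hmeas : ∀ t, Measurable (φ t))
    (hinv : ∀ t : EuclideanSpace ℝ (Fin d), MeasurePreserving (φ t) μ μ)
    (f : Ω → ℝ) (hf : Integrable f μ)
    (hharm : ∀ᵐ Λ ∂μ,
      LocallyIntegrable (fun t : EuclideanSpace ℝ (Fin d) => f (φ t Λ)) volume ∧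
      ∀ (x : EuclideanSpace ℝ (Fin d)) (r : ℝ), 0 < r →
        f (φ x Λ) = ⨍ y in Metric.ball x r, f (φ y Λ))
    (hunb : ∀ᵐ Λ ∂μ,
      (¬ ∀ s t : EuclideanSpace ℝ (Fin d), f (φ s Λ) = f (φ t Λ)) →
      ¬ ∃ C : ℝ, ∀ t : EuclideanSpace ℝ (Fin d), |f (φ t Λ)| ≤ C) :
    ∀ᵐ Λ ∂μ, ∀ s t : EuclideanSpace ℝ (Fin d), f (φ s Λ) = f (φ t Λ) := by
  have hcont : ∀ᵐ Λ ∂μ, Continuous fun t => ‖f (φ t Λ)‖ₑ := by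
    filter_upwards [hharm] with Λ hΛ
    exact (continuous_of_eq_average_ball hΛ.1 one_pos fun x => hΛ.2 x 1 one_pos).enorm
  obtain ⟨W, hW, hWeq⟩ := exists_measurable_uncurry_of_ae_continuous
    (u := fun t Λ => ‖f (φ t Λ)‖ₑ) (fun t => (hf.1.comp_measurePreserving (hinv t)).enorm) hcont
  have hmean : ∀ t, ∫⁻ Λ, W (t, Λ) ∂μ ≤ ∫⁻ Λ, ‖f Λ‖ₑ ∂μ := fun t => by
    rw [lintegral_congr_ae (hWeq.mono fun Λ hΛ => hΛ t)]
    have hmap : AEMeasurable (fun Λ => ‖f Λ‖ₑ) (μ.map (φ t)) := by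
      rw [(hinv t).map_eq]
      exact hf.1.enorm
    rw [← lintegral_map' hmap (hinv t).aemeasurable, (hinv t).map_eq]
  have hlim := ae_liminf_average_lt_top (ν := volume) hW hf.2.ne hmean
    (B := fun n : ℕ => ball 0 (2 * (n + 1 : ℝ)))
    (fun n => (measure_ball_pos _ _ (by positivity)).ne') (fun n => measure_ball_lt_top.ne)
  filter_upwards [hharm, hunb, hWeq, hlim] with Λ hΛ hub heq hl
  by_contra hconst
  simp only [heq] at hl
  exact hub hconst (exists_abs_le_of_liminf_average_lt_top hΛ.2 hl)
end

section
/- Let G ⊆ ℝ^d be open and f ∈ L¹_loc(G) a locally integrable function satisfying ∫_G f(y) Δφ(y) dy = 0 for all φ ∈ C_c^∞(G). Then there exists a harmonic function f̃ ∈ C^∞(G) with f = f̃ λ^d-a.e. on G (Weyl's lemma). -/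
open MeasureTheory Set

/-- The Euclidean Laplacian, as the sum of pure second derivatives. -/
noncomputable def euclLaplacian {d : ℕ} (f : EuclideanSpace ℝ (Fin d) → ℝ)
    (x : EuclideanSpace ℝ (Fin d)) : ℝ :=
  ∑ i : Fin d, iteratedFDeriv ℝ 2 f x ![EuclideanSpace.single i 1, EuclideanSpace.single i 1]

open scoped ContDiff Topology Convolution
open Filter

/-- The smooth profile `exp (-1 / (1 - s))`, extended by zero to `s ≥ 1`. -/
noncomputable def bumpProfile (s : ℝ) : ℝ := expNegInvGlue (1 - s)

lemma contDiff_bumpProfile : ContDiff ℝ ∞ bumpProfile :=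
  expNegInvGlue.contDiff.comp (contDiff_const.sub contDiff_id)

lemma bumpProfile_nonneg (s : ℝ) : 0 ≤ bumpProfile s := expNegInvGlue.nonneg _

lemma bumpProfile_eq_zero {s : ℝ} (hs : 1 ≤ s) : bumpProfile s = 0 :=
  expNegInvGlue.zero_of_nonpos (by linarith)

lemma hasDerivAt_bumpProfile (s : ℝ) : HasDerivAt bumpProfile (deriv bumpProfile s) s :=
  (contDiff_bumpProfile.differentiable (by simp) s).hasDerivAt

lemma continuous_deriv_bumpProfile : Continuous (deriv bumpProfile) :=
  contDiff_bumpProfile.continuous_deriv (by simp)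

lemma deriv_bumpProfile_eq_zero {s : ℝ} (hs : 1 ≤ s) : deriv bumpProfile s = 0 := by
  have hmin : IsLocalMin bumpProfile s := by
    refine Eventually.of_forall fun t => ?_
    rw [bumpProfile_eq_zero hs]
    exact bumpProfile_nonneg t
  exact hmin.deriv_eq_zero

/-- A primitive of `bumpProfile` that vanishes on `[1, ∞)`. -/
noncomputable def bumpPrimitive (s : ℝ) : ℝ := ∫ t in (1 : ℝ)..s, bumpProfile t

lemma hasDerivAt_bumpPrimitive (s : ℝ) : HasDerivAt bumpPrimitive (bumpProfile s) s :=
  contDiff_bumpProfile.continuous.integral_hasStrictDerivAt 1 s |>.hasDerivAt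

lemma deriv_bumpPrimitive : deriv bumpPrimitive = bumpProfile :=
  funext fun s => (hasDerivAt_bumpPrimitive s).deriv

lemma contDiff_bumpPrimitive : ContDiff ℝ ∞ bumpPrimitive := by
  rw [contDiff_infty_iff_deriv, deriv_bumpPrimitive]
  exact ⟨fun s => (hasDerivAt_bumpPrimitive s).differentiableAt, contDiff_bumpProfile⟩

lemma bumpPrimitive_eq_zero {s : ℝ} (hs : 1 ≤ s) : bumpPrimitive s = 0 := by
  refine (intervalIntegral.integral_congr fun t ht => ?_).trans intervalIntegral.integral_zero
  rw [uIcc_of_le hs] at ht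
  exact bumpProfile_eq_zero ht.1

section Radial

variable {d : ℕ}

lemma euclLaplacian_eq_sum_fderiv {u : EuclideanSpace ℝ (Fin d) → ℝ} (hu : ContDiff ℝ 2 u)
    (x : EuclideanSpace ℝ (Fin d)) :
    euclLaplacian u x = ∑ i : Fin d,
      fderiv ℝ (fun y => fderiv ℝ u y (EuclideanSpace.single i 1)) x
        (EuclideanSpace.single i 1) := by
  refine Finset.sum_congr rfl fun i _ => ?_
  have h : DifferentiableAt ℝ (fderiv ℝ u) x :=
    (hu.fderiv_right (m := 1) (by norm_num)).differentiable (by norm_num) x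
  rw [iteratedFDeriv_two_apply, fderiv_clm_apply h (differentiableAt_const _)]
  simp

lemma fderiv_comp_norm_sub_sq_single {u u' : ℝ → ℝ} (hu : ∀ s, HasDerivAt u (u' s) s) (a : ℝ)
    (x y : EuclideanSpace ℝ (Fin d)) (i : Fin d) :
    fderiv ℝ (fun z => u (a * ‖z - x‖ ^ 2)) y (EuclideanSpace.single i 1) =
      u' (a * ‖y - x‖ ^ 2) * (2 * a * (y i - x i)) := by
  have h1 : HasFDerivAt (fun z : EuclideanSpace ℝ (Fin d) => ‖z - x‖ ^ 2) _ y :=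
    ((hasFDerivAt_id y).sub_const x).norm_sq
  have h2 := (hu (a * ‖y - x‖ ^ 2)).comp_hasFDerivAt y (h1.const_mul a)
  rw [show (fun z => u (a * ‖z - x‖ ^ 2)) = u ∘ fun z => a * ‖z - x‖ ^ 2 from rfl, h2.fderiv]
  simp [EuclideanSpace.inner_single_right, -mul_eq_mul_left_iff]
  ring

lemma contDiff_comp_norm_sub_sq {n : ℕ∞} {u : ℝ → ℝ} (hu : ContDiff ℝ n u) (a : ℝ)
    (x : EuclideanSpace ℝ (Fin d)) : ContDiff ℝ n fun z => u (a * ‖z - x‖ ^ 2) :=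
  hu.comp (contDiff_const.mul ((contDiff_id.sub contDiff_const).norm_sq ℝ))

/-- The Laplacian of a radial function, written in terms of the squared radius. -/
lemma euclLaplacian_comp_norm_sub_sq {u u' u'' : ℝ → ℝ} (hu : ContDiff ℝ 2 u)
    (hu' : ∀ s, HasDerivAt u (u' s) s) (hu'' : ∀ s, HasDerivAt u' (u'' s) s) (a : ℝ)
    (x y : EuclideanSpace ℝ (Fin d)) :
    euclLaplacian (fun z => u (a * ‖z - x‖ ^ 2)) y =
      2 * a * d * u' (a * ‖y - x‖ ^ 2) +
        4 * a ^ 2 * ‖y - x‖ ^ 2 * u'' (a * ‖y - x‖ ^ 2) := by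
  rw [euclLaplacian_eq_sum_fderiv (contDiff_comp_norm_sub_sq (n := 2) hu a x)]
  have key : ∀ i : Fin d, fderiv ℝ (fun z => fderiv ℝ (fun z => u (a * ‖z - x‖ ^ 2)) z
      (EuclideanSpace.single i 1)) y (EuclideanSpace.single i 1) =
      2 * a * u' (a * ‖y - x‖ ^ 2) + 4 * a ^ 2 * u'' (a * ‖y - x‖ ^ 2) * (y i - x i) ^ 2 := by
    intro i
    simp_rw [fderiv_comp_norm_sub_sq_single hu']
    have h1 : DifferentiableAt ℝ (fun z => u' (a * ‖z - x‖ ^ 2)) y := by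
      refine (hu'' _).differentiableAt.comp y (DifferentiableAt.const_mul ?_ a)
      exact (differentiableAt_id.sub_const x).norm_sq ℝ
    have h2 : HasFDerivAt (fun z : EuclideanSpace ℝ (Fin d) => 2 * a * (z i - x i))
        ((2 * a) • (EuclideanSpace.proj i : EuclideanSpace ℝ (Fin d) →L[ℝ] ℝ)) y :=
      ((EuclideanSpace.proj i : EuclideanSpace ℝ (Fin d) →L[ℝ] ℝ).hasFDerivAt.sub_const
        (x i)).const_mul (2 * a)
    rw [(h1.hasFDerivAt.fun_mul h2).fderiv]
    simp only [FunLike.coe_add, Pi.add_apply, FunLike.coe_smul, Pi.smul_apply, smul_eq_mul,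
      fderiv_comp_norm_sub_sq_single hu'']
    simp
    ring
  rw [Finset.sum_congr rfl fun i _ => key i, Finset.sum_add_distrib, ← Finset.mul_sum,
    EuclideanSpace.norm_sq_eq]
  simp [← Finset.mul_sum, sq_abs]
  ring

end Radial

section Convolution

variable {d : ℕ} {g k : EuclideanSpace ℝ (Fin d) → ℝ}

open ContinuousLinearMap in
lemma fderiv_convolution_mul_apply (hg : LocallyIntegrable g) (hk : ContDiff ℝ 1 k)
    (hkc : HasCompactSupport k) (x v : EuclideanSpace ℝ (Fin d)) :
    fderiv ℝ (g ⋆[mul ℝ ℝ, volume] k) x v =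
      (g ⋆[mul ℝ ℝ, volume] fun y => fderiv ℝ k y v) x := by
  rw [(hkc.hasFDerivAt_convolution_right _ hg hk x).fderiv]
  exact convolution_precompR_apply _ hg (hkc.fderiv ℝ) (hk.continuous_fderiv (by norm_num)) x v

open ContinuousLinearMap in
lemma euclLaplacian_convolution_mul (hg : LocallyIntegrable g) (hk : ContDiff ℝ ∞ k)
    (hkc : HasCompactSupport k) (x : EuclideanSpace ℝ (Fin d)) :
    euclLaplacian (g ⋆[mul ℝ ℝ, volume] k) x = ∫ y, g y * euclLaplacian k (x - y) := by
  have hk' (v : EuclideanSpace ℝ (Fin d)) : ContDiff ℝ ∞ fun y => fderiv ℝ k y v :=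
    (hk.fderiv_right (m := ∞) (by simp)).clm_apply contDiff_const
  have hk'' (v : EuclideanSpace ℝ (Fin d)) :
      ContDiff ℝ ∞ fun y => fderiv ℝ (fun z => fderiv ℝ k z v) y v :=
    ((hk' v).fderiv_right (m := ∞) (by simp)).clm_apply contDiff_const
  have hconv : ContDiff ℝ ∞ (g ⋆[mul ℝ ℝ, volume] k) := hkc.contDiff_convolution_right _ hg hk
  rw [euclLaplacian_eq_sum_fderiv (contDiff_infty.1 hconv 2)]
  simp_rw [euclLaplacian_eq_sum_fderiv (contDiff_infty.1 hk 2), Finset.mul_sum]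
  rw [integral_finsetSum]
  · refine Finset.sum_congr rfl fun i _ => ?_
    simp_rw [fderiv_convolution_mul_apply hg (hk.of_le (by exact_mod_cast le_top)) hkc]
    rw [fderiv_convolution_mul_apply hg ((hk' _).of_le (by exact_mod_cast le_top))
      (hkc.fderiv_apply ℝ _)]
    rfl
  · intro i _
    exact ((hkc.fderiv_apply ℝ _).fderiv_apply ℝ _).convolutionExists_right
      (mul ℝ ℝ) hg (hk'' _).continuous x

end Convolution

section Mollifier

variable {d : ℕ}

/-- The radial mollifier `z ↦ a ^ d * bumpProfile (a ^ 2 * ‖z‖ ^ 2)`, which is supported in the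
ball of radius `a⁻¹`, integrated against `f` on `G`. -/
noncomputable def mollify (G : Set (EuclideanSpace ℝ (Fin d)))
    (f : EuclideanSpace ℝ (Fin d) → ℝ) (a : ℝ) (x : EuclideanSpace ℝ (Fin d)) : ℝ :=
  ∫ y in G, f y * (a ^ d * bumpProfile (a ^ 2 * ‖y - x‖ ^ 2))

lemma one_le_sq_mul_norm_sub_sq {x y : EuclideanSpace ℝ (Fin d)} {a R : ℝ} (hR : 0 < R)
    (ha : R⁻¹ ≤ a) (hy : y ∉ Metric.closedBall x R) : 1 ≤ a ^ 2 * ‖y - x‖ ^ 2 := by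
  rw [Metric.mem_closedBall, dist_eq_norm, not_le] at hy
  have h : 1 ≤ a * ‖y - x‖ := by
    calc 1 = R⁻¹ * R := (inv_mul_cancel₀ hR.ne').symm
      _ ≤ a * ‖y - x‖ := by gcongr; exact (inv_pos.2 hR).le.trans ha
  rw [← mul_pow]
  exact one_le_pow₀ h

lemma hasCompactSupport_comp_norm_sub_sq {u : ℝ → ℝ} (hu : ∀ s, 1 ≤ s → u s = 0) {a R : ℝ}
    (hR : 0 < R) (ha : R⁻¹ ≤ a) (x : EuclideanSpace ℝ (Fin d)) :
    HasCompactSupport fun y => u (a ^ 2 * ‖y - x‖ ^ 2) :=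
  .intro (isCompact_closedBall x R) fun _ hy => hu _ (one_le_sq_mul_norm_sub_sq hR ha hy)

lemma tsupport_comp_norm_sub_sq_subset {u : ℝ → ℝ} (hu : ∀ s, 1 ≤ s → u s = 0) {a R : ℝ}
    (hR : 0 < R) (ha : R⁻¹ ≤ a) (x : EuclideanSpace ℝ (Fin d)) :
    tsupport (fun y => u (a ^ 2 * ‖y - x‖ ^ 2)) ⊆ Metric.closedBall x R := by
  refine closure_minimal (fun y hy => ?_) Metric.isClosed_closedBall
  by_contra h
  exact hy (hu _ (one_le_sq_mul_norm_sub_sq hR ha h))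

lemma mollify_eq_setIntegral {G S : Set (EuclideanSpace ℝ (Fin d))} (hG : MeasurableSet G)
    (f : EuclideanSpace ℝ (Fin d) → ℝ) {x : EuclideanSpace ℝ (Fin d)} {a R : ℝ} (hR : 0 < R)
    (ha : R⁻¹ ≤ a) (hxS : Metric.closedBall x R ⊆ S) (hSG : S ⊆ G) :
    mollify G f a x = ∫ y in S, f y * (a ^ d * bumpProfile (a ^ 2 * ‖y - x‖ ^ 2)) := by
  refine setIntegral_eq_of_subset_of_forall_sdiff_eq_zero hG hSG fun y hy => ?_
  rw [bumpProfile_eq_zero (one_le_sq_mul_norm_sub_sq hR ha fun h => hy.2 (hxS h))]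
  simp

/-- The derivative in the scale of the radial mollifier. -/
noncomputable def mollifierDeriv (a : ℝ) (x y : EuclideanSpace ℝ (Fin d)) : ℝ :=
  d * a ^ (d - 1) * bumpProfile (a ^ 2 * ‖y - x‖ ^ 2) +
    a ^ d * (deriv bumpProfile (a ^ 2 * ‖y - x‖ ^ 2) * (2 * a * ‖y - x‖ ^ 2))

lemma hasDerivAt_mollifier (a : ℝ) (x y : EuclideanSpace ℝ (Fin d)) :
    HasDerivAt (fun b : ℝ => b ^ d * bumpProfile (b ^ 2 * ‖y - x‖ ^ 2))
      (mollifierDeriv a x y) a := by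
  have h1 := (hasDerivAt_pow 2 a).mul_const (‖y - x‖ ^ 2)
  have h2 := (hasDerivAt_bumpProfile (a ^ 2 * ‖y - x‖ ^ 2)).comp a h1
  refine ((hasDerivAt_pow d a).mul h2).congr_deriv ?_
  simp [mollifierDeriv]

lemma continuous_mollifierDeriv (x : EuclideanSpace ℝ (Fin d)) :
    Continuous fun p : ℝ × EuclideanSpace ℝ (Fin d) => mollifierDeriv p.1 x p.2 := by
  have h1 := contDiff_bumpProfile.continuous
  have h2 := continuous_deriv_bumpProfile
  unfold mollifierDeriv
  fun_prop

lemma mollifierDeriv_eq_euclLaplacian {a : ℝ} (ha : 0 < a) (x y : EuclideanSpace ℝ (Fin d)) :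
    mollifierDeriv a x y =
      a ^ d / (2 * a ^ 3) * euclLaplacian (fun z => bumpPrimitive (a ^ 2 * ‖z - x‖ ^ 2)) y := by
  rw [euclLaplacian_comp_norm_sub_sq (contDiff_infty.1 contDiff_bumpPrimitive 2)
    hasDerivAt_bumpPrimitive hasDerivAt_bumpProfile, mollifierDeriv]
  rcases d with _ | d
  · simp
    field_simp
    ring
  · simp
    field_simp
    ring

lemma hasDerivAt_setIntegral_mollifier {f : EuclideanSpace ℝ (Fin d) → ℝ}
    {x : EuclideanSpace ℝ (Fin d)} {R : ℝ} (hf : IntegrableOn f (Metric.closedBall x R)) (a : ℝ) :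
    HasDerivAt (fun b : ℝ => ∫ y in Metric.closedBall x R,
        f y * (b ^ d * bumpProfile (b ^ 2 * ‖y - x‖ ^ 2)))
      (∫ y in Metric.closedBall x R, f y * mollifierDeriv a x y) a := by
  have hc := contDiff_bumpProfile.continuous
  have hcd := continuous_mollifierDeriv x
  obtain ⟨C, hC⟩ := ((isCompact_closedBall a 1).prod
    (isCompact_closedBall x R)).exists_bound_of_continuousOn hcd.continuousOn
  refine (hasDerivAt_integral_of_dominated_loc_of_deriv_le
    (F := fun b y => f y * (b ^ d * bumpProfile (b ^ 2 * ‖y - x‖ ^ 2)))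
    (F' := fun b y => f y * mollifierDeriv b x y) (bound := fun y => ‖f y‖ * C)
    (Metric.closedBall_mem_nhds a one_pos) (.of_forall fun b => ?_) ?_ ?_ ?_ ?_ ?_).2
  · exact hf.aestronglyMeasurable.mul (by fun_prop : Continuous _).aestronglyMeasurable
  · exact hf.mul_continuousOn (by fun_prop) (isCompact_closedBall x R)
  · exact hf.aestronglyMeasurable.mul
      (hcd.comp (Continuous.prodMk_right a)).aestronglyMeasurable
  · refine ae_restrict_of_forall_mem measurableSet_closedBall fun y hy b hb => ?_
    rw [norm_mul]
    exact mul_le_mul_of_nonneg_left (hC (b, y) ⟨hb, hy⟩) (norm_nonneg _)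
  · exact hf.norm.mul_const C
  · exact .of_forall fun y b _ => (hasDerivAt_mollifier b x y).const_mul (f y)

/-- Integrating a weakly harmonic function against the Laplacian of a bump supported in `G`
gives zero, also when the integral is restricted to a set containing the support. -/
lemma setIntegral_mul_euclLaplacian_comp_norm_sub_sq_eq_zero
    {G S : Set (EuclideanSpace ℝ (Fin d))} (hG : MeasurableSet G)
    {f : EuclideanSpace ℝ (Fin d) → ℝ}
    (hweak : ∀ φ : EuclideanSpace ℝ (Fin d) → ℝ,
      ContDiff ℝ (⊤ : ℕ∞) φ → HasCompactSupport φ → tsupport φ ⊆ G →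
      ∫ y in G, f y * euclLaplacian φ y = 0)
    {u : ℝ → ℝ} (hu : ContDiff ℝ ∞ u) (hu0 : ∀ s, 1 ≤ s → u s = 0)
    {x : EuclideanSpace ℝ (Fin d)} {a R : ℝ} (hR : 0 < R) (ha : R⁻¹ ≤ a)
    (hxS : Metric.closedBall x R ⊆ S) (hSG : S ⊆ G) :
    ∫ y in S, f y * euclLaplacian (fun z => u (a ^ 2 * ‖z - x‖ ^ 2)) y = 0 := by
  have hts := tsupport_comp_norm_sub_sq_subset hu0 hR ha x
  rw [← hweak _ (contDiff_comp_norm_sub_sq hu (a ^ 2) x)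
    (hasCompactSupport_comp_norm_sub_sq hu0 hR ha x) (hts.trans (hxS.trans hSG))]
  refine (setIntegral_eq_of_subset_of_forall_sdiff_eq_zero hG hSG fun y hy => ?_).symm
  have hy' : y ∉ tsupport fun z => u (a ^ 2 * ‖z - x‖ ^ 2) := fun h => hy.2 (hxS (hts h))
  have h0 : iteratedFDeriv ℝ 2 (fun z => u (a ^ 2 * ‖z - x‖ ^ 2)) y = 0 :=
    image_eq_zero_of_notMem_tsupport fun h => hy' (tsupport_iteratedFDeriv_subset 2 h)
  simp [euclLaplacian, h0]

lemma mollify_eq_mollify {G : Set (EuclideanSpace ℝ (Fin d))} (hG : MeasurableSet G)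
    {f : EuclideanSpace ℝ (Fin d) → ℝ} (hf : LocallyIntegrableOn f G volume)
    (hweak : ∀ φ : EuclideanSpace ℝ (Fin d) → ℝ,
      ContDiff ℝ (⊤ : ℕ∞) φ → HasCompactSupport φ → tsupport φ ⊆ G →
      ∫ y in G, f y * euclLaplacian φ y = 0)
    {x : EuclideanSpace ℝ (Fin d)} {a b R : ℝ} (hR : 0 < R) (hxR : Metric.closedBall x R ⊆ G)
    (ha : R⁻¹ < a) (hb : R⁻¹ < b) : mollify G f a x = mollify G f b x := by
  have hfR := hf.integrableOn_compact_subset hxR (isCompact_closedBall x R)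
  rw [mollify_eq_setIntegral hG f hR ha.le subset_rfl hxR,
    mollify_eq_setIntegral hG f hR hb.le subset_rfl hxR]
  refine isOpen_Ioi.is_const_of_deriv_eq_zero isPreconnected_Ioi
    (f := fun b : ℝ => ∫ y in Metric.closedBall x R,
        f y * (b ^ d * bumpProfile (b ^ 2 * ‖y - x‖ ^ 2)))
    (fun t _ => (hasDerivAt_setIntegral_mollifier hfR t).differentiableAt.differentiableWithinAt)
    (fun t ht => ?_) ha hb
  have ht0 : 0 < t := (inv_pos.2 hR).trans ht
  rw [(hasDerivAt_setIntegral_mollifier hfR t).deriv]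
  simp_rw [mollifierDeriv_eq_euclLaplacian ht0, mul_left_comm (f _)]
  rw [integral_const_mul, setIntegral_mul_euclLaplacian_comp_norm_sub_sq_eq_zero hG hweak
    contDiff_bumpPrimitive (fun _ => bumpPrimitive_eq_zero) hR ht.le subset_rfl hxR]
  simp

/-- The total mass of the radial mollifiers. -/
noncomputable def bumpMass (d : ℕ) : ℝ :=
  ∫ z : EuclideanSpace ℝ (Fin d), bumpProfile (‖z‖ ^ 2)

lemma bumpMass_pos : 0 < bumpMass d := by
  have hc := contDiff_bumpProfile.continuous
  have hs := hasCompactSupport_comp_norm_sub_sq (fun _ => bumpProfile_eq_zero) one_pos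
    (inv_one.le) (0 : EuclideanSpace ℝ (Fin d))
  simp only [one_pow, one_mul, sub_zero] at hs
  refine Continuous.integral_pos_of_hasCompactSupport_nonneg_nonzero (x := 0) (by fun_prop) hs
    (fun z => bumpProfile_nonneg _) ?_
  have : 0 < bumpProfile 0 := expNegInvGlue.pos_of_pos (by norm_num)
  simpa using this.ne'

lemma integral_mollifier {a : ℝ} (ha : 0 < a) (x : EuclideanSpace ℝ (Fin d)) :
    ∫ y, a ^ d * bumpProfile (a ^ 2 * ‖y - x‖ ^ 2) = bumpMass d := by
  rw [integral_const_mul, integral_sub_right_eq_self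
    (fun z : EuclideanSpace ℝ (Fin d) => bumpProfile (a ^ 2 * ‖z‖ ^ 2)) x]
  have h := Measure.integral_comp_smul_of_nonneg volume
    (fun z : EuclideanSpace ℝ (Fin d) => bumpProfile (‖z‖ ^ 2)) a (hR := ha.le)
  simp only [norm_smul, Real.norm_eq_abs, mul_pow, sq_abs, finrank_euclideanSpace,
    Fintype.card_fin, smul_eq_mul] at h
  rw [h, bumpMass]
  field_simp

/-- Mollifications converge to a multiple of the function at its Lebesgue points. -/
lemma ae_tendsto_integral_mul_mollifier {f : EuclideanSpace ℝ (Fin d) → ℝ}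
    (hf : LocallyIntegrable f) :
    ∀ᵐ x, Tendsto (fun a : ℝ => ∫ y, f y * (a ^ d * bumpProfile (a ^ 2 * ‖y - x‖ ^ 2))) atTop
      (𝓝 (bumpMass d * f x)) := by
  have hc := contDiff_bumpProfile.continuous
  filter_upwards [IsUnifLocDoublingMeasure.ae_tendsto_average_norm_sub volume hf 1] with x hx
  have hlim := hx (l := atTop) (fun _ : ℝ => x) (fun a : ℝ => a⁻¹) tendsto_inv_atTop_nhdsGT_zero
    (by filter_upwards [eventually_gt_atTop 0] with a ha
        simpa using ha.le)
  have hlim' := hlim.const_mul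
    (bumpProfile 0 * volume.real (Metric.ball (0 : EuclideanSpace ℝ (Fin d)) 1))
  rw [mul_zero] at hlim'
  rw [tendsto_iff_norm_sub_tendsto_zero]
  refine squeeze_zero' (.of_forall fun _ => norm_nonneg _) ?_ hlim'
  filter_upwards [eventually_gt_atTop 0] with a ha
  have hzero {y : EuclideanSpace ℝ (Fin d)} (hy : y ∉ Metric.closedBall x a⁻¹) :
      bumpProfile (a ^ 2 * ‖y - x‖ ^ 2) = 0 :=
    bumpProfile_eq_zero (one_le_sq_mul_norm_sub_sq (inv_pos.2 ha) (inv_inv a).le hy)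
  have hK : Continuous fun y : EuclideanSpace ℝ (Fin d) =>
      a ^ d * bumpProfile (a ^ 2 * ‖y - x‖ ^ 2) := by fun_prop
  have hKc : HasCompactSupport fun y : EuclideanSpace ℝ (Fin d) =>
      a ^ d * bumpProfile (a ^ 2 * ‖y - x‖ ^ 2) :=
    .intro (isCompact_closedBall x a⁻¹) fun y hy => by simp [hzero hy]
  have hint : IntegrableOn (fun y => f y - f x) (Metric.closedBall x a⁻¹) :=
    (hf.integrableOn_isCompact (isCompact_closedBall _ _)).sub
      (continuousOn_const.integrableOn_compact (isCompact_closedBall _ _))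
  have heq : (∫ y, f y * (a ^ d * bumpProfile (a ^ 2 * ‖y - x‖ ^ 2))) - bumpMass d * f x =
      ∫ y in Metric.closedBall x a⁻¹,
        (f y - f x) * (a ^ d * bumpProfile (a ^ 2 * ‖y - x‖ ^ 2)) := by
    rw [setIntegral_eq_integral_of_forall_compl_eq_zero fun y hy => by simp [hzero hy],
      ← integral_mollifier ha x, mul_comm _ (f x), ← integral_const_mul, ← integral_sub]
    · simp_rw [sub_mul]
    · exact hf.integrable_smul_right_of_hasCompactSupport hK hKc
    · exact (hK.integrable_of_hasCompactSupport hKc).const_mul _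
  rw [heq]
  have hvol : volume.real (Metric.closedBall x a⁻¹) =
      (a ^ d)⁻¹ * volume.real (Metric.ball (0 : EuclideanSpace ℝ (Fin d)) 1) := by
    rw [measureReal_def, Measure.addHaar_closedBall _ _ (inv_pos.2 ha).le, ENNReal.toReal_mul,
      ENNReal.toReal_ofReal (by positivity), measureReal_def]
    simp
  have hvol0 : volume.real (Metric.ball (0 : EuclideanSpace ℝ (Fin d)) 1) ≠ 0 :=
    (ENNReal.toReal_pos (Metric.measure_ball_pos _ _ one_pos).ne' measure_ball_lt_top.ne).ne'
  have hbound : ‖∫ y in Metric.closedBall x a⁻¹,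
        (f y - f x) * (a ^ d * bumpProfile (a ^ 2 * ‖y - x‖ ^ 2))‖ ≤
      ∫ y in Metric.closedBall x a⁻¹, ‖f y - f x‖ * (a ^ d * bumpProfile 0) := by
    refine norm_integral_le_of_norm_le (hint.norm.mul_const _) (.of_forall fun y => ?_)
    have h0 := bumpProfile_nonneg (a ^ 2 * ‖y - x‖ ^ 2)
    have h1 : bumpProfile (a ^ 2 * ‖y - x‖ ^ 2) ≤ bumpProfile 0 :=
      expNegInvGlue.monotone (by have : 0 ≤ a ^ 2 * ‖y - x‖ ^ 2 := by positivity
                                 linarith)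
    rw [norm_mul, Real.norm_of_nonneg (by positivity : 0 ≤ a ^ d * bumpProfile _)]
    gcongr
  refine hbound.trans_eq ?_
  rw [setAverage_eq, integral_mul_const, hvol, smul_eq_mul]
  field_simp

lemma ae_tendsto_mollify {G : Set (EuclideanSpace ℝ (Fin d))} (hG : IsOpen G)
    {f : EuclideanSpace ℝ (Fin d) → ℝ} (hf : LocallyIntegrableOn f G volume) :
    ∀ᵐ x ∂(volume.restrict G),
      Tendsto (fun a => mollify G f a x) atTop (𝓝 (bumpMass d * f x)) := by
  rw [ae_restrict_iff' hG.measurableSet, ae_iff]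
  refine measure_null_of_locally_null _ fun x₀ hx₀ => ?_
  simp only [mem_ofPred_eq, Classical.not_imp] at hx₀
  obtain ⟨R, hR, hRG⟩ := Metric.nhds_basis_closedBall.mem_iff.1 (hG.mem_nhds hx₀.1)
  refine ⟨_, inter_mem_nhdsWithin _ (Metric.ball_mem_nhds x₀ (half_pos hR)), ?_⟩
  have hg : LocallyIntegrable ((Metric.closedBall x₀ R).indicator f) :=
    ((hf.integrableOn_compact_subset hRG (isCompact_closedBall x₀ R)).integrable_indicator
      measurableSet_closedBall).locallyIntegrable
  refine measure_mono_null ?_ (ae_iff.1 (ae_tendsto_integral_mul_mollifier hg))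
  rintro x ⟨hx, hxR⟩ hlim
  simp only [mem_ofPred_eq, Classical.not_imp] at hx
  have hsub : Metric.closedBall x (R / 2) ⊆ Metric.closedBall x₀ R :=
    Metric.closedBall_subset_closedBall' (by linarith [Metric.mem_ball.1 hxR])
  rw [indicator_of_mem (hsub (Metric.mem_closedBall_self (by positivity)))] at hlim
  refine hx.2 (hlim.congr' ?_)
  filter_upwards [eventually_ge_atTop (R / 2)⁻¹] with a ha
  rw [mollify_eq_setIntegral hG.measurableSet f (half_pos hR) ha hsub hRG,
    ← integral_indicator measurableSet_closedBall]
  simp_rw [indicator_mul_left]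

/-- On a small ball, a mollification at a fixed scale is a convolution. -/
lemma mollify_eq_convolution {G : Set (EuclideanSpace ℝ (Fin d))} (hG : MeasurableSet G)
    (f : EuclideanSpace ℝ (Fin d) → ℝ) {x₀ x : EuclideanSpace ℝ (Fin d)} {a R : ℝ} (hR : 0 < R)
    (ha : R⁻¹ ≤ a) (hx : Metric.closedBall x R ⊆ Metric.closedBall x₀ (2 * R))
    (hRG : Metric.closedBall x₀ (2 * R) ⊆ G) :
    mollify G f a x = ((Metric.closedBall x₀ (2 * R)).indicator f
      ⋆[ContinuousLinearMap.mul ℝ ℝ, volume]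
        fun z => a ^ d * bumpProfile (a ^ 2 * ‖z - 0‖ ^ 2)) x := by
  rw [mollify_eq_setIntegral hG f hR ha hx hRG, ← integral_indicator measurableSet_closedBall,
    convolution_def]
  simp_rw [indicator_mul_left, ContinuousLinearMap.mul_apply', sub_zero, norm_sub_rev x]

lemma contDiffAt_mollify {G : Set (EuclideanSpace ℝ (Fin d))} (hG : IsOpen G)
    {f : EuclideanSpace ℝ (Fin d) → ℝ} (hf : LocallyIntegrableOn f G volume)
    (hweak : ∀ φ : EuclideanSpace ℝ (Fin d) → ℝ,
      ContDiff ℝ (⊤ : ℕ∞) φ → HasCompactSupport φ → tsupport φ ⊆ G →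
      ∫ y in G, f y * euclLaplacian φ y = 0)
    {x₀ : EuclideanSpace ℝ (Fin d)} {a R : ℝ} (hR : 0 < R) (ha : R⁻¹ ≤ a)
    (hRG : Metric.closedBall x₀ (2 * R) ⊆ G) (c : ℝ) :
    ContDiffAt ℝ ∞ (fun x => c * mollify G f a x) x₀ ∧
      euclLaplacian (fun x => c * mollify G f a x) x₀ = 0 := by
  set u : ℝ → ℝ := fun s => c * (a ^ d * bumpProfile s) with hu_def
  have hu : ContDiff ℝ ∞ u := contDiff_const.mul (contDiff_const.mul contDiff_bumpProfile)
  have hu0 : ∀ s, 1 ≤ s → u s = 0 := fun s hs => by simp [hu_def, bumpProfile_eq_zero hs]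
  set g := (Metric.closedBall x₀ (2 * R)).indicator f
  have hg : LocallyIntegrable g :=
    ((hf.integrableOn_compact_subset hRG (isCompact_closedBall x₀ (2 * R))).integrable_indicator
      measurableSet_closedBall).locallyIntegrable
  set k : EuclideanSpace ℝ (Fin d) → ℝ := fun z => u (a ^ 2 * ‖z - 0‖ ^ 2) with hk_def
  have hk : ContDiff ℝ ∞ k := contDiff_comp_norm_sub_sq hu _ _
  have hkc : HasCompactSupport k := hasCompactSupport_comp_norm_sub_sq hu0 hR ha 0
  have heq : (fun x => c * mollify G f a x) =ᶠ[𝓝 x₀]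
      (g ⋆[ContinuousLinearMap.mul ℝ ℝ, volume] k) := by
    filter_upwards [Metric.ball_mem_nhds x₀ hR] with x hx
    have hsub : Metric.closedBall x R ⊆ Metric.closedBall x₀ (2 * R) :=
      Metric.closedBall_subset_closedBall' (by linarith [Metric.mem_ball.1 hx])
    rw [mollify_eq_convolution hG.measurableSet f hR ha hsub hRG, convolution_def,
      convolution_def, ← integral_const_mul]
    refine integral_congr_ae (.of_forall fun y => ?_)
    simp only [ContinuousLinearMap.mul_apply', hk_def, hu_def]
    ring
  refine ⟨(hkc.contDiff_convolution_right _ hg hk).contDiffAt.congr_of_eventuallyEq heq, ?_⟩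
  have hlap : euclLaplacian (fun x => c * mollify G f a x) x₀ =
      euclLaplacian (g ⋆[ContinuousLinearMap.mul ℝ ℝ, volume] k) x₀ := by
    simp only [euclLaplacian, (heq.iteratedFDeriv ℝ 2).eq_of_nhds]
  have hu' : ContDiff ℝ ∞ (deriv u) := (contDiff_infty_iff_deriv.1 hu).2
  have hd : ∀ s, HasDerivAt u (deriv u s) s := fun s => (hu.differentiable (by simp) s).hasDerivAt
  have hd' : ∀ s, HasDerivAt (deriv u) (deriv (deriv u) s) s :=
    fun s => (hu'.differentiable (by simp) s).hasDerivAt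
  rw [hlap, euclLaplacian_convolution_mul hg hk hkc,
    ← setIntegral_mul_euclLaplacian_comp_norm_sub_sq_eq_zero hG.measurableSet hweak hu hu0 hR ha
      (Metric.closedBall_subset_closedBall (by linarith : R ≤ 2 * R)) hRG,
    ← integral_indicator measurableSet_closedBall]
  refine integral_congr_ae (.of_forall fun y => ?_)
  simp only [indicator_mul_left, hk_def,
    euclLaplacian_comp_norm_sub_sq (contDiff_infty.1 hu 2) hd hd']
  simp only [sub_zero, norm_sub_rev x₀]
  rfl

end Mollifier

/-- Weyl's lemma: a locally integrable distributional solution of `Δf = 0` on an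
open set `G` has a smooth harmonic version. -/
theorem weyl_lemma {d : ℕ} (G : Set (EuclideanSpace ℝ (Fin d))) (hG : IsOpen G)
    (f : EuclideanSpace ℝ (Fin d) → ℝ)
    (hf : LocallyIntegrableOn f G volume)
    (hweak : ∀ φ : EuclideanSpace ℝ (Fin d) → ℝ,
      ContDiff ℝ (⊤ : ℕ∞) φ → HasCompactSupport φ → tsupport φ ⊆ G →
      ∫ y in G, f y * euclLaplacian φ y = 0) :
    ∃ ftilde : EuclideanSpace ℝ (Fin d) → ℝ,
      ContDiffOn ℝ (⊤ : ℕ∞) ftilde G ∧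
      (∀ x ∈ G, euclLaplacian ftilde x = 0) ∧
      ∀ᵐ x ∂(volume.restrict G), f x = ftilde x := by
  have hball : ∀ x ∈ G, ∃ R : ℝ, 0 < R ∧ Metric.closedBall x R ⊆ G :=
    fun x hx => Metric.nhds_basis_closedBall.mem_iff.1 (hG.mem_nhds hx)
  choose! r hr hrG using hball
  set F : EuclideanSpace ℝ (Fin d) → ℝ :=
    fun x => (bumpMass d)⁻¹ * mollify G f (2 * (r x)⁻¹) x with hF
  have hmass : bumpMass d ≠ 0 := bumpMass_pos.ne'
  have hscale : ∀ x ∈ G, ∀ R > 0, Metric.closedBall x R ⊆ G → ∀ a > R⁻¹,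
      F x = (bumpMass d)⁻¹ * mollify G f a x := by
    intro x hx R hR hRG a ha
    have hrx : (r x)⁻¹ < 2 * (r x)⁻¹ := by linarith [inv_pos.2 (hr x hx)]
    simp only [hF]
    congr 1
    rcases le_total R (r x) with h | h
    · exact mollify_eq_mollify hG.measurableSet hf hweak (hr x hx) (hrG x hx) hrx
        ((inv_anti₀ hR h).trans_lt ha)
    · exact mollify_eq_mollify hG.measurableSet hf hweak hR hRG
        ((inv_anti₀ (hr x hx) h).trans_lt hrx) ha
  have hlocal : ∀ x₀ ∈ G, ContDiffAt ℝ ∞ F x₀ ∧ euclLaplacian F x₀ = 0 := by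
    intro x₀ hx₀
    obtain ⟨R, hR, hRr⟩ : ∃ R : ℝ, 0 < R ∧ 2 * R = r x₀ :=
      ⟨r x₀ / 2, half_pos (hr x₀ hx₀), by ring⟩
    have hRG : Metric.closedBall x₀ (2 * R) ⊆ G := hRr ▸ hrG x₀ hx₀
    have ha : R⁻¹ < 2 * R⁻¹ := by linarith [inv_pos.2 hR]
    have heq : F =ᶠ[𝓝 x₀] fun x => (bumpMass d)⁻¹ * mollify G f (2 * R⁻¹) x := by
      filter_upwards [Metric.ball_mem_nhds x₀ hR] with x hx
      have hsub : Metric.closedBall x R ⊆ G :=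
        (Metric.closedBall_subset_closedBall' (by linarith [Metric.mem_ball.1 hx])).trans hRG
      exact hscale x (hsub (Metric.mem_closedBall_self hR.le)) R hR hsub _ ha
    obtain ⟨hsmooth, hharm⟩ := contDiffAt_mollify hG hf hweak hR ha.le hRG (bumpMass d)⁻¹
    refine ⟨hsmooth.congr_of_eventuallyEq heq, ?_⟩
    rw [← hharm]
    simp only [euclLaplacian, (heq.iteratedFDeriv ℝ 2).eq_of_nhds]
  refine ⟨F, fun x hx => (hlocal x hx).1.contDiffWithinAt, fun x hx => (hlocal x hx).2, ?_⟩
  filter_upwards [ae_tendsto_mollify hG hf, ae_restrict_mem hG.measurableSet] with x hlim hx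
  have hconst : Tendsto (fun a => mollify G f a x) atTop (𝓝 (bumpMass d * F x)) := by
    refine tendsto_const_nhds.congr' ?_
    filter_upwards [eventually_gt_atTop (r x)⁻¹] with a ha
    rw [hscale x hx (r x) (hr x hx) (hrG x hx) a ha, mul_inv_cancel_left₀ hmass]
  exact mul_left_cancel₀ hmass (tendsto_nhds_unique hlim hconst)
end
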